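/- arXiv:2110.12907 — 7 statements merged into one kernel-verified Lean document; each statement's English description precedes it below -/
import Mathlib

section
/- For every Lebesgue-integrable h : ℝ^m → ℝ, the HMC operator conserves the integral: ∫_{ℝ^m} (T h)(q) dq = ∫_{ℝ^m} h(q) dq. -/
open MeasureTheory

section HMC

variable {α β γ δ 𝕜 E : Type*} [MeasurableSpace α] [MeasurableSpace β] [MeasurableSpace γ]
  [MeasurableSpace δ] [RCLike 𝕜] [NormedAddCommGroup E] [NormedSpace ℝ E] [NormedSpace 𝕜 E]
  {μ : Measure α} {ν : Measure β} {κ : Measure γ} {ξ : Measure δ}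

/-- The Hamiltonian Monte Carlo operator `T`, transporting an observable `h` of the position along
the motion `R` and integrating over the initial momentum, weighted by the density `g` of the final
momentum. The phase spaces before and after the motion may differ, `g` is an arbitrary function
rather than a probability density, and `h` is vector-valued. -/
noncomputable def hmcOperator (ν : Measure β) (R : α × β → γ × δ) (g : δ → 𝕜) (h : γ → E) (q : α) :
    E :=
  ∫ p, g (R (q, p)).2 • h (R (q, p)).1 ∂ν

theorem integral_comp_of_measurePreserving {R : α → γ} (hR : MeasurePreserving R μ κ) {F : γ → E}
    (hF : AEStronglyMeasurable F κ) : ∫ x, F (R x) ∂μ = ∫ y, F y ∂κ := by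
  rw [← hR.map_eq] at hF ⊢
  exact (integral_map hR.aemeasurable hF).symm

theorem integral_integral_comp_of_measurePreserving [SFinite μ] [SFinite ν] {R : α × β → γ}
    (hR : MeasurePreserving R (μ.prod ν) κ) {F : γ → E} (hF : Integrable F κ) :
    ∫ q, ∫ p, F (R (q, p)) ∂ν ∂μ = ∫ z, F z ∂κ :=
  calc ∫ q, ∫ p, F (R (q, p)) ∂ν ∂μ
      = ∫ x, F (R x) ∂μ.prod ν := integral_integral (hR.integrable_comp_of_integrable hF)
    _ = ∫ z, F z ∂κ := integral_comp_of_measurePreserving hR hF.aestronglyMeasurable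

theorem integral_prod_snd_smul_fst [SFinite κ] [SFinite ξ] (g : δ → 𝕜) (h : γ → E) :
    ∫ z, g z.2 • h z.1 ∂κ.prod ξ = (∫ p, g p ∂ξ) • ∫ q, h q ∂κ :=
  (integral_prod_swap fun w : δ × γ ↦ g w.1 • h w.2).trans (integral_prod_smul g h)

theorem integral_hmcOperator [SFinite μ] [SFinite ν] [SFinite κ] [SFinite ξ] {R : α × β → γ × δ}
    (hR : MeasurePreserving R (μ.prod ν) (κ.prod ξ)) {g : δ → 𝕜} (hg : Integrable g ξ)
    {h : γ → E} (hh : Integrable h κ) :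
    ∫ q, hmcOperator ν R g h q ∂μ = (∫ p, g p ∂ξ) • ∫ q, h q ∂κ := by
  have hgh : Integrable (fun z ↦ g z.2 • h z.1) (κ.prod ξ) := (hg.smul_prod hh).swap
  calc ∫ q, hmcOperator ν R g h q ∂μ
      = ∫ z, g z.2 • h z.1 ∂κ.prod ξ := integral_integral_comp_of_measurePreserving hR hgh
    _ = (∫ p, g p ∂ξ) • ∫ q, h q ∂κ := integral_prod_snd_smul_fst g h

theorem hmc_operator_conserves_integral_general [SFinite μ] [SFinite ν] [SFinite κ] [SFinite ξ]
    {R : α × β → γ × δ} (hR : MeasurePreserving R (μ.prod ν) (κ.prod ξ)) {g : δ → 𝕜}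
    (hg : ∫ p, g p ∂ξ = 1) {h : γ → E} (hh : Integrable h κ) :
    ∫ q, hmcOperator ν R g h q ∂μ = ∫ q, h q ∂κ := by
  have hg_int : Integrable g ξ := .of_integral_ne_zero (hg ▸ one_ne_zero)
  rw [integral_hmcOperator hR hg_int hh, hg, one_smul]

end HMC

/-- The HMC operator conserves the integral:
`∫ q, (T h) q = ∫ q, h q` for every Lebesgue-integrable `h`. -/
theorem hmc_operator_conserves_integral
    (m : ℕ) (hm : 1 ≤ m)
    (f g : EuclideanSpace ℝ (Fin m) → ℝ)
    (hf_meas : Measurable f)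
    (hf_pos : ∀ᵐ q : EuclideanSpace ℝ (Fin m), 0 < f q)
    (hf_int : Integrable f)
    (hf_int_pos : 0 < ∫ q, f q)
    (hg_meas : Measurable g)
    (hg_nonneg : ∀ p, 0 ≤ g p)
    (hg_int : (∫ p, g p) = 1)
    (R : EuclideanSpace ℝ (Fin m) × EuclideanSpace ℝ (Fin m) →
         EuclideanSpace ℝ (Fin m) × EuclideanSpace ℝ (Fin m))
    (hR_bij : Function.Bijective R)
    (hR_mp : MeasurePreserving R volume volume)
    (hinv : ∀ q p : EuclideanSpace ℝ (Fin m),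
      f (R (q, p)).1 * g (R (q, p)).2 = f q * g p)
    (h : EuclideanSpace ℝ (Fin m) → ℝ) (hh_int : Integrable h) :
    (∫ q, ∫ p, h (R (q, p)).1 * g (R (q, p)).2) = ∫ q, h q := by
  simpa only [hmcOperator, smul_eq_mul, mul_comm] using
    hmc_operator_conserves_integral_general hR_mp hg_int hh_int
end

section
/- Let h ∈ H and set S(h) := inf_{n ≥ 0} ‖Tⁿ h‖². If (n_k) is a strictly increasing sequence of natural numbers such that T^{n_k} h converges weakly to some h∞ ∈ H, then ‖h∞‖² = S(h); i.e., every weak accumulation point of the sequence (Tⁿ h) has squared norm equal to S(h). -/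
open Filter
open scoped RealInnerProductSpace

/-!
For symmetric `T` the inner product `⟪Tᵃ h, Tᵇ h⟫` depends only on `a + b`, so it equals `‖Tᶜ h‖²`
whenever `a + b = 2c`. Along an ultrafilter the exponents `n i` have constant parity, so the
midpoints `c = (n j + n i) / 2` are integers; letting `j` grow and then `i` turns
`⟪T ^ n j h, T ^ n i h⟫ = ‖Tᶜ h‖²` into `‖h'‖² = lim ‖Tᶜ h‖²`, where `h'` is the weak limit. The
right-hand side is the infimum because `‖Tᶜ h‖²` is a convex sequence which does not tend to
infinity, hence is antitone.
-/

section ConvexSequence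

variable {b : ℕ → ℝ}

lemma tendsto_atTop_of_convex_of_lt (hb : ∀ n, 2 * b (n + 1) ≤ b n + b (n + 2)) {N : ℕ}
    (hN : b N < b (N + 1)) : Tendsto b atTop atTop := by
  have increments_mono : Monotone fun n => b (n + 1) - b n :=
    monotone_nat_of_le_succ fun n => by linarith [hb n]
  have linear_growth (k : ℕ) : b N + k * (b (N + 1) - b N) ≤ b (k + N) := by
    induction k with
    | zero => simp
    | succ k ih =>
      have increment_le : b (N + 1) - b N ≤ b (k + N + 1) - b (k + N) :=
        increments_mono (Nat.le_add_left N k)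
      rw [Nat.add_right_comm]
      push_cast
      linarith
  refine (tendsto_add_atTop_iff_nat N).1 (tendsto_atTop_mono linear_growth ?_)
  exact tendsto_atTop_add_const_left _ _
    (tendsto_natCast_atTop_atTop.atTop_mul_const (sub_pos.2 hN))

lemma antitone_of_convex_of_not_tendsto_atTop (hb : ∀ n, 2 * b (n + 1) ≤ b n + b (n + 2))
    (hb_top : ¬ Tendsto b atTop atTop) : Antitone b :=
  antitone_nat_of_succ_le fun _ =>
    not_lt.1 fun hlt => hb_top (tendsto_atTop_of_convex_of_lt hb hlt)

end ConvexSequence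

lemma eventually_eventually_even_add {ι : Type*} (g : Ultrafilter ι) (n : ι → ℕ) :
    ∀ᶠ i in g, ∀ᶠ j in g, Even (n j + n i) := by
  have constant_parity : (∀ᶠ i in g, Even (n i)) ∨ ∀ᶠ i in g, Odd (n i) :=
    Ultrafilter.eventually_or.1 (.of_forall fun i => Nat.even_or_odd (n i))
  rcases constant_parity with h | h
  · exact h.mono fun i hi => h.mono fun j hj => hj.add hi
  · exact h.mono fun i hi => h.mono fun j hj => hj.add_odd hi

lemma tendsto_add_div_two_atTop {ι : Type*} {l : Filter ι} {n : ι → ℕ} (hn : Tendsto n l atTop)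
    (m : ℕ) : Tendsto (fun i => (n i + m) / 2) l atTop :=
  (Nat.tendsto_div_const_atTop two_ne_zero).comp
    (tendsto_atTop_mono (fun i => Nat.le_add_right (n i) m) hn)

section SymmetricIterates

open scoped InnerProductSpace

variable {𝕜 E ι : Type*} [RCLike 𝕜] [SeminormedAddCommGroup E] [InnerProductSpace 𝕜 E]
  {T : E →ₗ[𝕜] E} {h h' : E} {l : Filter ι} {n : ι → ℕ}

lemma re_inner_pow_apply_pow_apply (hT : T.IsSymmetric) (h : E) {a b c : ℕ} (hc : a + b = c + c) :
    RCLike.re ⟪(T ^ a) h, (T ^ b) h⟫_𝕜 = ‖(T ^ c) h‖ ^ 2 := by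
  rw [hT.pow a, ← Module.End.mul_apply, ← pow_add, hc, pow_add, Module.End.mul_apply, ← hT.pow c,
    inner_self_eq_norm_sq]

lemma two_mul_norm_sq_pow_succ_apply_le (hT : T.IsSymmetric) (h : E) (n : ℕ) :
    2 * ‖(T ^ (n + 1)) h‖ ^ 2 ≤ ‖(T ^ n) h‖ ^ 2 + ‖(T ^ (n + 2)) h‖ ^ 2 :=
  calc 2 * ‖(T ^ (n + 1)) h‖ ^ 2 = 2 * RCLike.re ⟪(T ^ n) h, (T ^ (n + 2)) h⟫_𝕜 := by
        rw [re_inner_pow_apply_pow_apply hT h (c := n + 1) (by ring)]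
    _ ≤ 2 * (‖(T ^ n) h‖ * ‖(T ^ (n + 2)) h‖) := by gcongr; exact re_inner_le_norm _ _
    _ ≤ ‖(T ^ n) h‖ ^ 2 + ‖(T ^ (n + 2)) h‖ ^ 2 := by
        rw [← mul_assoc]; exact two_mul_le_add_sq _ _

lemma tendsto_norm_sq_pow_midpoint_apply (hT : T.IsSymmetric) {m : ℕ}
    (hlim : Tendsto (fun j => ⟪(T ^ n j) h, (T ^ m) h⟫_𝕜) l (nhds ⟪h', (T ^ m) h⟫_𝕜))
    (heven : ∀ᶠ j in l, Even (n j + m)) :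
    Tendsto (fun j => ‖(T ^ ((n j + m) / 2)) h‖ ^ 2) l
      (nhds (RCLike.re ⟪h', (T ^ m) h⟫_𝕜)) := by
  refine ((RCLike.continuous_re.tendsto _).comp hlim).congr' (heven.mono fun j hj => ?_)
  refine re_inner_pow_apply_pow_apply hT h ?_
  rw [← two_mul, Nat.two_mul_div_two_of_even hj]

lemma antitone_norm_sq_pow_apply [l.NeBot] (hT : T.IsSymmetric) (hn : Tendsto n l atTop) {r : ℝ}
    (hr : Tendsto (fun i => ‖(T ^ n i) h‖ ^ 2) l (nhds r)) :
    Antitone fun k => ‖(T ^ k) h‖ ^ 2 :=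
  antitone_of_convex_of_not_tendsto_atTop (two_mul_norm_sq_pow_succ_apply_le hT h) fun htop =>
    not_tendsto_nhds_of_tendsto_atTop (htop.comp hn) r hr

lemma tendsto_norm_sq_pow_apply_iInf [l.NeBot] (hT : T.IsSymmetric) (hn : Tendsto n l atTop) {r : ℝ}
    (hr : Tendsto (fun i => ‖(T ^ n i) h‖ ^ 2) l (nhds r)) :
    Tendsto (fun i => ‖(T ^ n i) h‖ ^ 2) l (nhds (⨅ k, ‖(T ^ k) h‖ ^ 2)) :=
  (tendsto_atTop_ciInf (antitone_norm_sq_pow_apply hT hn hr)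
    ⟨0, Set.forall_mem_range.2 fun _ => sq_nonneg _⟩).comp hn

theorem weak_accumulation_point_norm_eq_inf_general [l.NeBot] (hT : T.IsSymmetric)
    (hn : Tendsto n l atTop)
    (hweak : ∀ y, Tendsto (fun i => ⟪(T ^ n i) h, y⟫_𝕜) l (nhds ⟪h', y⟫_𝕜)) :
    ‖h'‖ ^ 2 = ⨅ k, ‖(T ^ k) h‖ ^ 2 := by
  let g := Ultrafilter.of l
  have hgl : ↑g ≤ l := Ultrafilter.of_le l
  have inner_eq_iInf : ∀ᶠ i in g, RCLike.re ⟪h', (T ^ n i) h⟫_𝕜 = ⨅ k, ‖(T ^ k) h‖ ^ 2 := by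
    filter_upwards [eventually_eventually_even_add g n] with i heven
    have hmid := tendsto_norm_sq_pow_midpoint_apply hT ((hweak _).mono_left hgl) heven
    exact tendsto_nhds_unique hmid <|
      tendsto_norm_sq_pow_apply_iInf hT (tendsto_add_div_two_atTop (hn.mono_left hgl) (n i)) hmid
  have inner_tendsto :
      Tendsto (fun i => RCLike.re ⟪h', (T ^ n i) h⟫_𝕜) g (nhds (‖h'‖ ^ 2)) := by
    simp only [inner_re_symm (𝕜 := 𝕜) h', ← inner_self_eq_norm_sq (𝕜 := 𝕜) h']
    exact (RCLike.continuous_re.tendsto _).comp ((hweak h').mono_left hgl)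
  exact tendsto_nhds_unique_of_eventuallyEq inner_tendsto tendsto_const_nhds inner_eq_iInf

end SymmetricIterates

/-- For a self-adjoint nonexpansive continuous linear operator `T` on a real
Hilbert space, every weak accumulation point `hLimit` of the sequence of iterates `Tⁿ h` satisfies
`‖hLimit‖² = S(h) := ⨅ n, ‖Tⁿ h‖²`. -/
theorem weak_accumulation_point_norm_eq_inf
    {H : Type*} [NormedAddCommGroup H] [InnerProductSpace ℝ H] [CompleteSpace H]
    (T : H →L[ℝ] H)
    (hsa : ∀ x y : H, ⟪T x, y⟫ = ⟪x, T y⟫)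
    (hne : ∀ x : H, ‖T x‖ ≤ ‖x‖)
    (h : H)
    (nk : ℕ → ℕ) (hnk : StrictMono nk)
    (hLimit : H)
    (hweak : ∀ y : H,
      Tendsto (fun k => ⟪(T ^ nk k) h, y⟫) atTop (nhds ⟪hLimit, y⟫)) :
    ‖hLimit‖ ^ 2 = ⨅ n : ℕ, ‖(T ^ n) h‖ ^ 2 := by
  simp only [← ContinuousLinearMap.coe_coe, ContinuousLinearMap.toLinearMap_pow] at hweak ⊢
  exact weak_accumulation_point_norm_eq_inf_general hsa hnk.tendsto_atTop hweak
end

section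
/- For every h ∈ H, the sequence of iterates Tⁿ h converges weakly in H to (ℓ(h)/ℓ(f))·f as n → ∞. -/
open Filter
open scoped RealInnerProductSpace

/-!
For self-adjoint `T`, `‖x - T² x‖² = ‖x‖² - 2 ‖T x‖² + ‖T² x‖²`. Applied at `Tⁿ x`, the right-hand
side is a second difference of the convergent sequence `‖Tⁿ x‖²`, so `Tⁿ` tends to zero on the
range of `1 - T²`. Contractivity extends this to the closure of the range, which is the orthogonal
complement of `ker (1 - T²)`. Vectors in this kernel have their norm preserved by `T`, so
rigidity puts the projection of `h` onto it in the line of `f`, and the invariant functional `ℓ`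
determines the coefficient.
-/

section Contraction

variable {𝕜 E : Type*} [Semiring 𝕜] [SeminormedAddCommGroup E] [Module 𝕜 E] {T : E →L[𝕜] E}

theorem antitone_norm_pow_apply (hT : ∀ x, ‖T x‖ ≤ ‖x‖) (x : E) :
    Antitone fun n : ℕ => ‖(T ^ n) x‖ := by
  refine antitone_nat_of_succ_le fun n => ?_
  rw [pow_succ', mul_apply_eq_comp]
  exact hT _

theorem exists_tendsto_norm_pow_apply (hT : ∀ x, ‖T x‖ ≤ ‖x‖) (x : E) :
    ∃ r : ℝ, Tendsto (fun n : ℕ => ‖(T ^ n) x‖) atTop (nhds r) :=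
  ⟨_, tendsto_atTop_ciInf (antitone_norm_pow_apply hT x)
    ⟨0, Set.forall_mem_range.2 fun _ => norm_nonneg _⟩⟩

theorem isClosed_setOf_tendsto_pow_apply_zero (hT : ∀ x, ‖T x‖ ≤ ‖x‖) :
    IsClosed {x | Tendsto (fun n : ℕ => (T ^ n) x) atTop (nhds 0)} := by
  have hlip (n : ℕ) : LipschitzWith 1 (T ^ n) :=
    AddMonoidHomClass.lipschitz_of_bound_nnnorm _ 1 fun x => by
      rw [one_mul]
      exact antitone_norm_pow_apply hT x n.zero_le
  exact (LipschitzWith.uniformEquicontinuous _ 1 hlip).equicontinuous.isClosed_setOfPred_tendsto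
    continuous_const

theorem norm_apply_eq_of_apply_apply_eq_self (hT : ∀ x, ‖T x‖ ≤ ‖x‖) {p : E}
    (hp : T (T p) = p) : ‖T p‖ = ‖p‖ :=
  (hT p).antisymm (by simpa only [hp] using hT (T p))

end Contraction

section InnerProductSpace

variable {𝕜 E : Type*} [RCLike 𝕜]

theorem norm_sub_apply_apply_sq_of_isSymmetric [SeminormedAddCommGroup E]
    [InnerProductSpace 𝕜 E] {T : E →ₗ[𝕜] E} (hT : T.IsSymmetric) (x : E) :
    ‖x - T (T x)‖ ^ 2 = ‖x‖ ^ 2 - 2 * ‖T x‖ ^ 2 + ‖T (T x)‖ ^ 2 := by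
  rw [norm_sub_sq (𝕜 := 𝕜), ← hT, inner_self_eq_norm_sq]

theorem tendsto_pow_apply_sub_apply_apply [SeminormedAddCommGroup E] [InnerProductSpace 𝕜 E]
    {T : E →L[𝕜] E} (hsymm : (T : E →ₗ[𝕜] E).IsSymmetric) (hT : ∀ x, ‖T x‖ ≤ ‖x‖) (x : E) :
    Tendsto (fun n : ℕ => (T ^ n) (x - T (T x))) atTop (nhds 0) := by
  obtain ⟨r, hr⟩ := exists_tendsto_norm_pow_apply hT x
  have hsq : Tendsto (fun n : ℕ => ‖(T ^ n) x‖ ^ 2) atTop (nhds (r ^ 2)) := hr.pow 2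
  have hnorm_sq (n : ℕ) : ‖(T ^ n) (x - T (T x))‖ ^ 2 =
      ‖(T ^ n) x‖ ^ 2 - 2 * ‖(T ^ (n + 1)) x‖ ^ 2 + ‖(T ^ (n + 2)) x‖ ^ 2 := by
    have hcomm : (T ^ n) (T (T x)) = T (T ((T ^ n) x)) := by
      simp only [← mul_apply_eq_comp, ← mul_assoc, ← pow_succ, ← pow_succ']
    rw [map_sub, hcomm, pow_succ' T (n + 1), pow_succ' T n]
    exact norm_sub_apply_apply_sq_of_isSymmetric hsymm ((T ^ n) x)
  have hzero : Tendsto (fun n : ℕ => ‖(T ^ n) (x - T (T x))‖ ^ 2) atTop (nhds 0) := by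
    have hlim := (hsq.sub ((hsq.comp (tendsto_add_atTop_nat 1)).const_mul 2)).add
      (hsq.comp (tendsto_add_atTop_nat 2))
    rw [show r ^ 2 - 2 * r ^ 2 + r ^ 2 = 0 by ring] at hlim
    exact hlim.congr fun n => (hnorm_sq n).symm
  rw [tendsto_zero_iff_norm_tendsto_zero]
  simpa using hzero.sqrt

variable [NormedAddCommGroup E] [InnerProductSpace 𝕜 E] [CompleteSpace E] {T : E →L[𝕜] E}

theorem tendsto_pow_apply_zero_of_mem_orthogonal_ker (hsa : IsSelfAdjoint T)
    (hT : ∀ x, ‖T x‖ ≤ ‖x‖) {x : E} (hx : x ∈ (1 - T ^ 2).ker.orthogonal) :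
    Tendsto (fun n : ℕ => (T ^ n) x) atTop (nhds 0) := by
  have hadj : ContinuousLinearMap.adjoint (1 - T ^ 2) = 1 - T ^ 2 :=
    ((IsSelfAdjoint.one _).sub (hsa.pow 2)).adjoint_eq
  rw [ContinuousLinearMap.orthogonal_ker, hadj] at hx
  refine closure_minimal ?_ (isClosed_setOf_tendsto_pow_apply_zero hT) hx
  rintro _ ⟨y, rfl⟩
  simpa [pow_two] using tendsto_pow_apply_sub_apply_apply hsa.isSymmetric hT y

theorem exists_apply_apply_eq_self_and_tendsto_pow_apply_sub (hsa : IsSelfAdjoint T)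
    (hT : ∀ x, ‖T x‖ ≤ ‖x‖) (x : E) :
    ∃ p, T (T p) = p ∧ Tendsto (fun n : ℕ => (T ^ n) (x - p)) atTop (nhds 0) := by
  obtain ⟨p, hp, q, hq, rfl⟩ := (1 - T ^ 2).ker.exists_add_mem_mem_orthogonal x
  have hfix : p = T (T p) := by simpa [pow_two, sub_eq_zero] using hp
  refine ⟨p, hfix.symm, ?_⟩
  simpa using tendsto_pow_apply_zero_of_mem_orthogonal_ker hsa hT hq

theorem iterates_converge_weakly_general (hsa : IsSelfAdjoint T) (hT : ∀ x, ‖T x‖ ≤ ‖x‖)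
    {f : E} (hf : T f = f) (hrigid : ∀ x, ‖T x‖ = ‖x‖ → ∃ c : 𝕜, x = c • f)
    {ℓ : E →L[𝕜] 𝕜} (hℓ : ∀ x, ℓ (T x) = ℓ x) (hℓf : ℓ f ≠ 0) (h : E) :
    Tendsto (fun n : ℕ => (T ^ n) h) atTop (nhds ((ℓ h / ℓ f) • f)) := by
  obtain ⟨p, hTTp, hlim⟩ := exists_apply_apply_eq_self_and_tendsto_pow_apply_sub hsa hT h
  obtain ⟨c, rfl⟩ := hrigid p (norm_apply_eq_of_apply_apply_eq_self hT hTTp)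
  have hℓpow (n : ℕ) (x : E) : ℓ ((T ^ n) x) = ℓ x := by
    induction n with
    | zero => rfl
    | succ n ih => rw [pow_succ', mul_apply_eq_comp, hℓ, ih]
  have hfpow (n : ℕ) : (T ^ n) f = f := by
    rw [FunLike.coe_pow_eq_iterate, Function.iterate_fixed hf]
  have hc : ℓ h / ℓ f = c := by
    have hzero : ℓ (h - c • f) = 0 := by
      have hℓlim := (ℓ.continuous.tendsto 0).comp hlim
      simp only [Function.comp_def, hℓpow, map_zero] at hℓlim
      exact tendsto_nhds_unique tendsto_const_nhds hℓlim
    rw [div_eq_iff hℓf]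
    simpa [sub_eq_zero] using hzero
  rw [hc]
  simpa only [map_sub, map_smul, hfpow, sub_add_cancel, zero_add] using hlim.add_const (c • f)

end InnerProductSpace

/-- Under self-adjointness, nonexpansiveness, a fixed point `f`,
rigidity (norm-preserved vectors are multiples of `f`), and a `T`-invariant continuous
linear functional `ℓ` with `ℓ f ≠ 0`, the iterates `Tⁿ h` converge weakly to
`(ℓ h / ℓ f) • f`. -/
theorem iterates_converge_weakly
    {H : Type*} [NormedAddCommGroup H] [InnerProductSpace ℝ H] [CompleteSpace H]
    (T : H →L[ℝ] H)
    (hsa : ∀ x y : H, ⟪T x, y⟫ = ⟪x, T y⟫)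
    (hne : ∀ x : H, ‖T x‖ ≤ ‖x‖)
    (f : H) (hf : T f = f)
    (hrigid : ∀ x : H, ‖T x‖ = ‖x‖ → ∃ c : ℝ, x = c • f)
    (ℓ : H →L[ℝ] ℝ) (hℓ : ∀ x : H, ℓ (T x) = ℓ x) (hℓf : ℓ f ≠ 0)
    (h : H) :
    ∀ y : H,
      Tendsto (fun n => ⟪(T ^ n) h, y⟫) atTop (nhds ⟪(ℓ h / ℓ f) • f, y⟫) := by
  have hself : IsSelfAdjoint T := LinearMap.IsSymmetric.isSelfAdjoint hsa
  exact fun y => (iterates_converge_weakly_general hself hne hf hrigid hℓ hℓf h).inner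
    tendsto_const_nhds
end

section
/- Suppose β ∈ (0,1), Q is jointly measurable (so κ(q) := μ(q) defines a Markov kernel on ℝ^m), and for every p ∈ ℝ^m the map q ↦ Q(q,p) is differentiable with the operator norm of its derivative at most β at every point. Then for every n ≥ 1 and all q₁, q₂ ∈ ℝ^m, writing κⁿ(q) for the n-step transition law (the n-fold composition of the kernel κ) started from q, there exists a coupling γ of κⁿ(q₁) and κⁿ(q₂) with ∫ ‖x − y‖ dγ ≤ βⁿ·‖q₁ − q₂‖; in particular W₁(κⁿ(q₁), κⁿ(q₂)) ≤ βⁿ·‖q₁ − q₂‖, i.e., the Markov recursion converges geometrically in the W₁ metric with rate at least 1 − β. -/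
open MeasureTheory ProbabilityTheory

/-- The Wasserstein-1 distance: infimum of `∫ ‖x − y‖ dγ` over couplings `γ` of `μ` and `ν`. -/
noncomputable def wassersteinW1 {E : Type*} [NormedAddCommGroup E] [MeasurableSpace E]
    (μ ν : Measure E) : ℝ :=
  sInf ((fun γ : Measure (E × E) => ∫ z, ‖z.1 - z.2‖ ∂γ) ''
    {γ : Measure (E × E) | γ.map Prod.fst = μ ∧ γ.map Prod.snd = ν})

/-- The `n`-fold composition of a Markov kernel with itself. -/
noncomputable def kernelIter {E : Type*} [MeasurableSpace E] (κ : Kernel E E) :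
    ℕ → Kernel E E
  | 0 => Kernel.id
  | n + 1 => κ ∘ₖ kernelIter κ n

/-!
Run the motion from two positions with the *same* random momentum at every step. This synchronous
motion is a Markov chain of pairs whose coordinates are each copies of the original chain, and every
step shrinks the distance of the pair by the factor `β`, whatever the momentum, by the mean value
inequality. Hence the law of the pair after `n` steps is a coupling supported on pairs at distance
at most `βⁿ ‖q₁ - q₂‖`.
-/

open scoped ENNReal NNReal

section KernelIter

variable {X Y : Type*} [MeasurableSpace X] [MeasurableSpace Y]

instance isMarkovKernel_kernelIter (κ : Kernel X X) [IsMarkovKernel κ] (n : ℕ) :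
    IsMarkovKernel (kernelIter κ n) := by
  induction n with
  | zero => exact inferInstanceAs (IsMarkovKernel Kernel.id)
  | succ n ih => exact inferInstanceAs (IsMarkovKernel (κ ∘ₖ kernelIter κ n))

theorem map_kernelIter_eq_comap {η : Kernel X X} {κ : Kernel Y Y} {f : X → Y} (hf : Measurable f)
    (h : η.map f = κ.comap f hf) (n : ℕ) :
    (kernelIter η n).map f = (kernelIter κ n).comap f hf := by
  induction n with
  | zero => simp only [kernelIter, Kernel.id_map hf, Kernel.id_comap hf]
  | succ n ih =>
    calc (η ∘ₖ kernelIter η n).map f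
        = κ.comap f hf ∘ₖ kernelIter η n := by rw [Kernel.map_comp, h]
      _ = κ ∘ₖ (kernelIter κ n).comap f hf := by rw [← Kernel.comp_map _ _ hf, ih]
      _ = (κ ∘ₖ kernelIter κ n).comap f hf := by
        simp only [← Kernel.comp_deterministic_eq_comap, Kernel.comp_assoc]

theorem ae_kernelIter_le_pow_mul {κ : Kernel X X} {V : X → ℝ≥0∞} (hV : Measurable V) {c : ℝ≥0∞}
    (h : ∀ x, ∀ᵐ y ∂κ x, V y ≤ c * V x) (n : ℕ) (x : X) :
    ∀ᵐ y ∂kernelIter κ n x, V y ≤ c ^ n * V x := by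
  have measurableSet_le_const (b : ℝ≥0∞) : MeasurableSet {y | V y ≤ b} :=
    measurableSet_le hV measurable_const
  induction n with
  | zero =>
    rw [kernelIter, Kernel.id_apply, ae_dirac_iff (measurableSet_le_const _), pow_zero, one_mul]
  | succ n ih =>
    refine Kernel.ae_comp_of_ae_ae (measurableSet_le_const _) ?_
    filter_upwards [ih] with y hy
    filter_upwards [h y] with z hz
    calc V z ≤ c * V y := hz
      _ ≤ c * (c ^ n * V x) := by gcongr
      _ = c ^ (n + 1) * V x := by ring

end KernelIter

section RandomMap

variable {X X' Y Y' P : Type*} [MeasurableSpace X] [MeasurableSpace X'] [MeasurableSpace Y]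
  [MeasurableSpace Y'] [MeasurableSpace P] {G : Measure P}

/-- The transition kernel of the random map `x ↦ Φ (x, p)` with `p` drawn from `G`: the law from `x`
is the pushforward of `G` under `p ↦ Φ (x, p)`. It is the zero kernel if `Φ` is not measurable. -/
noncomputable def randomMapKernel (G : Measure P) (Φ : X × P → Y) : Kernel X Y :=
  (Kernel.id ×ₖ Kernel.const X G).map Φ

theorem randomMapKernel_apply [SFinite G] {Φ : X × P → Y} (hΦ : Measurable Φ) (x : X) :
    randomMapKernel G Φ x = G.map fun p => Φ (x, p) := by
  rw [randomMapKernel, Kernel.map_apply _ hΦ, Kernel.prod_apply, Kernel.id_apply,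
    Kernel.const_apply, Measure.dirac_prod, Measure.map_map hΦ measurable_prodMk_left]
  rfl

theorem isMarkovKernel_randomMapKernel [IsProbabilityMeasure G] {Φ : X × P → Y}
    (hΦ : Measurable Φ) : IsMarkovKernel (randomMapKernel G Φ) :=
  Kernel.IsMarkovKernel.map _ hΦ

theorem map_randomMapKernel_eq_comap [SFinite G] {Φ : X × P → Y} {Φ' : X' × P → Y'}
    (hΦ : Measurable Φ) (hΦ' : Measurable Φ') {f : X → X'} (hf : Measurable f) {g : Y → Y'}
    (hg : Measurable g) (h : ∀ x p, g (Φ (x, p)) = Φ' (f x, p)) :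
    (randomMapKernel G Φ).map g = (randomMapKernel G Φ').comap f hf := by
  ext1 x
  have hΦx : Measurable fun p => Φ (x, p) := hΦ.comp measurable_prodMk_left
  rw [Kernel.map_apply _ hg, Kernel.comap_apply, randomMapKernel_apply hΦ,
    randomMapKernel_apply hΦ', Measure.map_map hg hΦx]
  exact congrArg G.map (funext (h x))

/-- Moves both points of a pair by the random map `Q` with a common value of the randomness `p`;
its kernel `randomMapKernel G (synchronousMap Q)` is the synchronous coupling of the chain
`randomMapKernel G Q` with itself. -/
def synchronousMap (Q : X × P → Y) (w : (X × X) × P) : Y × Y :=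
  (Q (w.1.1, w.2), Q (w.1.2, w.2))

theorem measurable_synchronousMap {Q : X × P → Y} (hQ : Measurable Q) :
    Measurable (synchronousMap Q) :=
  (hQ.comp (by fun_prop)).prodMk (hQ.comp (by fun_prop))

theorem map_fst_kernelIter_synchronousMap [SFinite G] {Q : X × P → X} (hQ : Measurable Q) (n : ℕ)
    (z : X × X) :
    (kernelIter (randomMapKernel G (synchronousMap Q)) n z).map Prod.fst =
      kernelIter (randomMapKernel G Q) n z.1 := by
  have h := map_kernelIter_eq_comap measurable_fst (map_randomMapKernel_eq_comap (G := G)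
    (measurable_synchronousMap hQ) hQ measurable_fst measurable_fst fun _ _ => rfl) n
  rw [← Kernel.map_apply _ measurable_fst, h, Kernel.comap_apply]

theorem map_snd_kernelIter_synchronousMap [SFinite G] {Q : X × P → X} (hQ : Measurable Q) (n : ℕ)
    (z : X × X) :
    (kernelIter (randomMapKernel G (synchronousMap Q)) n z).map Prod.snd =
      kernelIter (randomMapKernel G Q) n z.2 := by
  have h := map_kernelIter_eq_comap measurable_snd (map_randomMapKernel_eq_comap (G := G)
    (measurable_synchronousMap hQ) hQ measurable_snd measurable_snd fun _ _ => rfl) n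
  rw [← Kernel.map_apply _ measurable_snd, h, Kernel.comap_apply]

end RandomMap

theorem ae_kernelIter_synchronousMap_edist_le {X P : Type*} [PseudoEMetricSpace X]
    [MeasurableSpace X] [OpensMeasurableSpace X] [SecondCountableTopology X] [MeasurableSpace P]
    {G : Measure P} [SFinite G] {Q : X × P → X} (hQ : Measurable Q) {K : ℝ≥0}
    (hK : ∀ᵐ p ∂G, LipschitzWith K fun q => Q (q, p)) (n : ℕ) (z : X × X) :
    ∀ᵐ w ∂kernelIter (randomMapKernel G (synchronousMap Q)) n z,
      edist w.1 w.2 ≤ K ^ n * edist z.1 z.2 := by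
  have hsync := measurable_synchronousMap hQ
  refine ae_kernelIter_le_pow_mul (V := fun w : X × X => edist w.1 w.2) measurable_edist
    (fun w => ?_) n z
  have hsync_w : Measurable fun p => synchronousMap Q (w, p) := hsync.comp measurable_prodMk_left
  rw [randomMapKernel_apply hsync, ae_map_iff hsync_w.aemeasurable
    (measurableSet_le measurable_edist measurable_const)]
  filter_upwards [hK] with p hp
  exact hp w.1 w.2

theorem wassersteinW1_le_integral_norm_sub {E : Type*} [NormedAddCommGroup E] [MeasurableSpace E]
    {μ ν : Measure E} {γ : Measure (E × E)} (hfst : γ.map Prod.fst = μ)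
    (hsnd : γ.map Prod.snd = ν) : wassersteinW1 μ ν ≤ ∫ z, ‖z.1 - z.2‖ ∂γ := by
  refine csInf_le ⟨0, ?_⟩ ⟨γ, ⟨hfst, hsnd⟩, rfl⟩
  rintro _ ⟨γ', -, rfl⟩
  exact integral_nonneg fun _ => norm_nonneg _

theorem hmc_n_step_geometric_contraction_general {E P : Type*} [NormedAddCommGroup E]
    [MeasurableSpace E] [OpensMeasurableSpace E] [SecondCountableTopology E] [MeasurableSpace P]
    {Q : E × P → E} (hQ : Measurable Q) {G : Measure P} [IsProbabilityMeasure G] {K : ℝ≥0}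
    (hK : ∀ᵐ p ∂G, LipschitzWith K fun q => Q (q, p)) {κ : Kernel E E}
    (hκ : ∀ q, κ q = G.map fun p => Q (q, p)) (n : ℕ) (q₁ q₂ : E) :
    (∃ γ : Measure (E × E),
      γ.map Prod.fst = kernelIter κ n q₁ ∧
      γ.map Prod.snd = kernelIter κ n q₂ ∧
      (∫ z, ‖z.1 - z.2‖ ∂γ) ≤ K ^ n * ‖q₁ - q₂‖) ∧
    wassersteinW1 (kernelIter κ n q₁) (kernelIter κ n q₂) ≤ K ^ n * ‖q₁ - q₂‖ := by
  obtain rfl : κ = randomMapKernel G Q := by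
    ext1 q
    rw [hκ, randomMapKernel_apply hQ]
  have := isMarkovKernel_randomMapKernel (G := G) (measurable_synchronousMap hQ)
  let γ := kernelIter (randomMapKernel G (synchronousMap Q)) n (q₁, q₂)
  have hfst : γ.map Prod.fst = kernelIter (randomMapKernel G Q) n q₁ :=
    map_fst_kernelIter_synchronousMap hQ n (q₁, q₂)
  have hsnd : γ.map Prod.snd = kernelIter (randomMapKernel G Q) n q₂ :=
    map_snd_kernelIter_synchronousMap hQ n (q₁, q₂)
  have hdist : ∀ᵐ z ∂γ, ‖z.1 - z.2‖ ≤ K ^ n * ‖q₁ - q₂‖ := by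
    filter_upwards [ae_kernelIter_synchronousMap_edist_le hQ hK n (q₁, q₂)] with z hz
    rw [edist_nndist, edist_nndist] at hz
    simpa only [← dist_eq_norm] using mod_cast hz
  have hcost : ∫ z, ‖z.1 - z.2‖ ∂γ ≤ K ^ n * ‖q₁ - q₂‖ := by
    simpa using (le_abs_self _).trans
      (norm_integral_le_of_norm_le_const (hdist.mono fun z hz => (norm_norm _).trans_le hz))
  exact ⟨⟨γ, hfst, hsnd, hcost⟩, (wassersteinW1_le_integral_norm_sub hfst hsnd).trans hcost⟩

/-- If `q ↦ Q(q,p)` is differentiable with derivative of operator norm at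
most `β < 1` everywhere, then the `n`-step HMC transition laws contract at geometric rate:
there is a coupling of `κⁿ(q₁)` and `κⁿ(q₂)` with transport cost at most `βⁿ ‖q₁ − q₂‖`,
so `W₁(κⁿ(q₁), κⁿ(q₂)) ≤ βⁿ ‖q₁ − q₂‖`. -/
theorem hmc_n_step_geometric_contraction
    (m : ℕ) (hm : 1 ≤ m) (β : ℝ) (hβ0 : 0 < β) (hβ1 : β < 1)
    (Q : EuclideanSpace ℝ (Fin m) × EuclideanSpace ℝ (Fin m) → EuclideanSpace ℝ (Fin m))
    (hQ : Measurable Q)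
    (G : Measure (EuclideanSpace ℝ (Fin m))) [IsProbabilityMeasure G]
    (hdiff : ∀ p q : EuclideanSpace ℝ (Fin m),
      DifferentiableAt ℝ (fun q' => Q (q', p)) q)
    (hder : ∀ p q : EuclideanSpace ℝ (Fin m),
      ‖fderiv ℝ (fun q' => Q (q', p)) q‖ ≤ β)
    (κ : Kernel (EuclideanSpace ℝ (Fin m)) (EuclideanSpace ℝ (Fin m)))
    [IsMarkovKernel κ]
    (hκ : ∀ q : EuclideanSpace ℝ (Fin m), κ q = G.map (fun p => Q (q, p)))
    (n : ℕ) (hn : 1 ≤ n)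
    (q₁ q₂ : EuclideanSpace ℝ (Fin m)) :
    (∃ γ : Measure (EuclideanSpace ℝ (Fin m) × EuclideanSpace ℝ (Fin m)),
      γ.map Prod.fst = kernelIter κ n q₁ ∧
      γ.map Prod.snd = kernelIter κ n q₂ ∧
      (∫ z, ‖z.1 - z.2‖ ∂γ) ≤ β ^ n * ‖q₁ - q₂‖) ∧
    wassersteinW1 (kernelIter κ n q₁) (kernelIter κ n q₂) ≤ β ^ n * ‖q₁ - q₂‖ := by
  exact hmc_n_step_geometric_contraction_general (K := ⟨β, hβ0.le⟩) hQ
    (.of_forall fun p => lipschitzWith_of_nnnorm_fderiv_le (hdiff p) (hder p)) hκ n q₁ q₂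
end

section
/- Let g : ℝ^m → ℝ be continuous with g(y) > 0 for all y and ∫ g = 1, and consider the Markov transition kernel on ℝ^m with translation density: P(x, A) = ∫_A g(y − x) dy for Borel sets A. Then every compact set C ⊂ ℝ^m is a small set for this kernel: there exist ε > 0 and a probability measure ν on ℝ^m such that P(x, A) ≥ ε·ν(A) for every x ∈ C and every Borel set A ⊂ ℝ^m. -/
open MeasureTheory

/-! A lower semicontinuous density that is positive on `C × {y₀}` exceeds some `δ > 0` there by
compactness of `C`, and by the tube lemma it does so on `C × B` for a neighbourhood `B` of `y₀`.
Shrinking `B` to have finite measure, `ν` is the normalized restriction of the reference measure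
to `B`, and `ε = δ μ(B)`. -/

open ProbabilityTheory Topology
open scoped ENNReal NNReal

theorem exists_pos_forall_lt_of_lowerSemicontinuousOn {X : Type*} [TopologicalSpace X]
    {f : X → ℝ≥0∞} {C : Set X} (hC : IsCompact C) (hf : LowerSemicontinuousOn f C)
    (hf_pos : ∀ x ∈ C, 0 < f x) : ∃ δ : ℝ≥0, 0 < δ ∧ ∀ x ∈ C, δ < f x := by
  obtain rfl | hC_ne := C.eq_empty_or_nonempty
  · exact ⟨1, one_pos, by simp⟩
  obtain ⟨x₀, hx₀, hmin⟩ := hf.exists_isMinOn hC_ne hC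
  obtain ⟨δ, hδ, hδ_lt⟩ := ENNReal.lt_iff_exists_nnreal_btwn.1 (hf_pos x₀ hx₀)
  exact ⟨δ, ENNReal.coe_pos.1 hδ, fun x hx ↦ hδ_lt.trans_le (hmin hx)⟩

section SmallSets

variable {X Y : Type*} [MeasurableSpace Y]

/-- `C` is a small set for the family of transition probabilities `P`: a Doeblin minorization
`P x ≥ ε ν` holds uniformly over `x ∈ C`. `P` is a bare family of measures, to which a Markov
kernel coerces, since measurability in `x` plays no part in the notion. -/
def IsSmallSet (P : X → Measure Y) (C : Set X) : Prop :=
  ∃ ε : ℝ, 0 < ε ∧ ∃ ν : Measure Y, IsProbabilityMeasure ν ∧ ∀ x ∈ C, ENNReal.ofReal ε • ν ≤ P x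

theorem isSmallSet_withDensity_iff {μ : Measure Y} {p : X → Y → ℝ≥0∞} {C : Set X} :
    IsSmallSet (fun x ↦ μ.withDensity (p x)) C ↔
      ∃ ε : ℝ, 0 < ε ∧ ∃ ν : Measure Y, IsProbabilityMeasure ν ∧
        ∀ x ∈ C, ∀ A, MeasurableSet A → ENNReal.ofReal ε * ν A ≤ ∫⁻ y in A, p x y ∂μ := by
  simp +contextual only [IsSmallSet, Measure.le_iff, Measure.smul_apply, smul_eq_mul,
    withDensity_apply]

theorem smul_restrict_le_withDensity {μ : Measure Y} {f : Y → ℝ≥0∞} {B : Set Y} {c : ℝ≥0∞}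
    (hB : MeasurableSet B) (hf : ∀ y ∈ B, c ≤ f y) : c • μ.restrict B ≤ μ.withDensity f := by
  rw [← withDensity_const, ← withDensity_indicator hB]
  exact withDensity_mono (.of_forall (Set.indicator_le hf))

theorem measure_smul_cond {μ : Measure Y} {B : Set Y} (hB₀ : μ B ≠ 0) (hB : μ B ≠ ∞) :
    μ B • μ[|B] = μ.restrict B := by
  rw [ProbabilityTheory.cond, smul_smul, ENNReal.mul_inv_cancel hB₀ hB, one_smul]

theorem isSmallSet_withDensity_of_forall_le {μ : Measure Y} {p : X → Y → ℝ≥0∞} {C : Set X}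
    {B : Set Y} (hB : MeasurableSet B) (hB₀ : μ B ≠ 0) (hB_fin : μ B ≠ ∞)
    {δ : ℝ≥0} (hδ : 0 < δ) (hp : ∀ x ∈ C, ∀ y ∈ B, δ ≤ p x y) :
    IsSmallSet (fun x ↦ μ.withDensity (p x)) C := by
  refine ⟨δ * μ.real B, mul_pos hδ (ENNReal.toReal_pos hB₀ hB_fin), μ[|B],
    cond_isProbabilityMeasure_of_finite hB₀ hB_fin, fun x hx ↦ ?_⟩
  calc ENNReal.ofReal (δ * μ.real B) • μ[|B] = (δ : ℝ≥0∞) • μ.restrict B := by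
        rw [ENNReal.ofReal_mul δ.coe_nonneg, ENNReal.ofReal_coe_nnreal,
          ofReal_measureReal hB_fin, mul_smul, measure_smul_cond hB₀ hB_fin]
    _ ≤ μ.withDensity (p x) := smul_restrict_le_withDensity hB (hp x hx)

theorem isSmallSet_withDensity_of_lowerSemicontinuous [TopologicalSpace X] [TopologicalSpace Y]
    [OpensMeasurableSpace Y] {μ : Measure Y} [IsLocallyFiniteMeasure μ] [μ.IsOpenPosMeasure]
    {p : X → Y → ℝ≥0∞} (hp : LowerSemicontinuous p.uncurry) {C : Set X} (hC : IsCompact C)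
    {y₀ : Y} (hp_pos : ∀ x ∈ C, 0 < p x y₀) : IsSmallSet (fun x ↦ μ.withDensity (p x)) C := by
  have hp_y₀ : LowerSemicontinuous (p · y₀) := hp.comp (Continuous.prodMk_left y₀)
  obtain ⟨δ, hδ, hδ_lt⟩ :=
    exists_pos_forall_lt_of_lowerSemicontinuousOn hC (hp_y₀.lowerSemicontinuousOn C) hp_pos
  have hp_swap : LowerSemicontinuous fun z : Y × X ↦ p z.2 z.1 := hp.comp continuous_swap
  have htube : ∀ᶠ y in 𝓝 y₀, ∀ x ∈ C, δ < p x y :=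
    hC.eventually_forall_of_forall_eventually fun x hx ↦
      hp_swap (y₀, x) δ (hδ_lt x hx)
  obtain ⟨U, hU, hU_open, hU_fin⟩ := μ.exists_isOpen_measure_lt_top y₀
  obtain ⟨B, hB, hB_open, hB_mem⟩ := mem_nhds_iff.1 (htube.and (hU_open.mem_nhds hU))
  exact isSmallSet_withDensity_of_forall_le hB_open.measurableSet
    (hB_open.measure_ne_zero μ ⟨y₀, hB_mem⟩)
    (measure_ne_top_of_subset (fun y hy ↦ (hB hy).2) hU_fin.ne) hδ
    fun x hx y hy ↦ ((hB hy).1 x hx).le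

end SmallSets

theorem compact_sets_are_small_for_translation_kernel_general
    {G : Type*} [AddGroup G] [TopologicalSpace G] [ContinuousSub G]
    [MeasurableSpace G] [OpensMeasurableSpace G]
    {μ : Measure G} [IsLocallyFiniteMeasure μ] [μ.IsOpenPosMeasure]
    {g : G → ℝ≥0∞} (hg : LowerSemicontinuous g) {C : Set G} (hC : IsCompact C)
    {y₀ : G} (hg_pos : ∀ x ∈ C, 0 < g (y₀ - x)) :
    IsSmallSet (fun x ↦ μ.withDensity fun y ↦ g (y - x)) C :=
  isSmallSet_withDensity_of_lowerSemicontinuous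
    (hg.comp (continuous_snd.sub continuous_fst)) hC hg_pos

/-- For the Markov kernel with translation density
`P(x, A) = ∫_A g(y − x) dy`, where `g` is continuous, everywhere positive and integrates
to `1`, every compact set `C ⊆ ℝ^m` is small: there are `ε > 0` and a probability
measure `ν` with `P(x, A) ≥ ε ν(A)` for all `x ∈ C` and all Borel sets `A`. -/
theorem compact_sets_are_small_for_translation_kernel
    (m : ℕ) (hm : 1 ≤ m)
    (g : EuclideanSpace ℝ (Fin m) → ℝ)
    (hg_cont : Continuous g)
    (hg_pos : ∀ y, 0 < g y)
    (hg_int : (∫ y, g y) = 1)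
    (C : Set (EuclideanSpace ℝ (Fin m))) (hC : IsCompact C) :
    ∃ ε : ℝ, 0 < ε ∧
      ∃ ν : Measure (EuclideanSpace ℝ (Fin m)), IsProbabilityMeasure ν ∧
        ∀ x ∈ C, ∀ A : Set (EuclideanSpace ℝ (Fin m)), MeasurableSet A →
          ENNReal.ofReal ε * ν A ≤ ∫⁻ y in A, ENNReal.ofReal (g (y - x)) :=
  isSmallSet_withDensity_iff.1 <| compact_sets_are_small_for_translation_kernel_general
    (ENNReal.continuous_ofReal.comp hg_cont).lowerSemicontinuous hC (y₀ := 0)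
    fun _ _ ↦ ENNReal.ofReal_pos.2 (hg_pos _)
end

section
/- Suppose β ∈ (0,1), R > 0, p ∈ ℝ^m, and the map q ↦ Q(q,p) is differentiable on ℝ^m, with the operator norm of its derivative at most β at every q with ‖q‖ > R and at most 1 at every q ∈ ℝ^m. Then for all q₁, q₂ ∈ ℝ^m with ‖q₁‖ > 2R and ‖q₂‖ > 2R, one has ‖Q(q₁,p) − Q(q₂,p)‖ ≤ ((1+β)/2)·‖q₁ − q₂‖. -/
/-!
On a segment `[x, y]` the increment of `f` is at most the integral of `‖Df‖ ‖y - x‖`, so a bound `β`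
off a set `s` and `K` on `s` give the Lipschitz constant `β + (K - β) v`, where `v` is the fraction
of the segment spent in `s`. If `s` is a ball of radius `R` and both endpoints have distance at
least `2R` from its centre, then the part of the segment inside `s` has length at most `2R`, while
each of the two parts outside has length at least `R`; hence `v ≤ 1/2`.
-/

section

open AffineMap MeasureTheory Metric Set

variable {E F : Type*} [NormedAddCommGroup E] [NormedSpace ℝ E]
  [NormedAddCommGroup F] [NormedSpace ℝ F]

theorem norm_sub_le_add_mul_volume_of_norm_deriv_le {f : ℝ → F} {a b C K : ℝ} {s : Set ℝ}
    (hab : a ≤ b) (hs : MeasurableSet s) (hfc : ContinuousOn f (Icc a b))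
    (hfd : DifferentiableOn ℝ f (Ioo a b))
    (hC : ∀ t ∈ Ioo a b, t ∉ s → ‖deriv f t‖ ≤ C)
    (hK : ∀ t ∈ Ioo a b, t ∈ s → ‖deriv f t‖ ≤ K) :
    ‖f b - f a‖ ≤ C * (b - a) + (K - C) * volume.real (Ioo a b ∩ s) := by
  have hind : IntervalIntegrable (s.indicator fun _ ↦ K - C) volume a b := by
    rw [intervalIntegrable_iff_integrableOn_Ioo_of_le hab]
    exact (integrableOn_const (by simp) (by simp)).indicator hs
  have hbound : ∀ t ∈ Ioo a b, ‖deriv f t‖ ≤ C + s.indicator (fun _ ↦ K - C) t := by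
    intro t ht
    by_cases hts : t ∈ s
    · simpa [hts] using hK t ht hts
    · simpa [hts] using hC t ht hts
  calc ‖f b - f a‖
      ≤ ∫ t in a..b, (C + s.indicator (fun _ ↦ K - C) t) :=
        norm_sub_le_integral_of_norm_deriv_le_of_le hab hfc hfd (.of_forall hbound)
          (intervalIntegrable_const.add hind)
    _ = C * (b - a) + ∫ t in a..b, s.indicator (fun _ ↦ K - C) t := by
        rw [intervalIntegral.integral_add intervalIntegrable_const hind,
          intervalIntegral.integral_const, smul_eq_mul, mul_comm]
    _ = C * (b - a) + (K - C) * volume.real (Ioo a b ∩ s) := by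
        rw [intervalIntegral.integral_of_le hab, integral_Ioc_eq_integral_Ioo,
          setIntegral_indicator hs, setIntegral_const, smul_eq_mul, mul_comm (volume.real _)]

theorem norm_sub_le_add_mul_volume_of_norm_fderiv_le {f : E → F} {x y : E} {C K : ℝ} {s : Set E}
    (hs : MeasurableSet (lineMap (k := ℝ) x y ⁻¹' s)) (hfc : ContinuousOn f (segment ℝ x y))
    (hfd : ∀ z ∈ openSegment ℝ x y, DifferentiableAt ℝ f z)
    (hC : ∀ z ∈ openSegment ℝ x y, z ∉ s → ‖fderiv ℝ f z‖ ≤ C)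
    (hK : ∀ z ∈ openSegment ℝ x y, z ∈ s → ‖fderiv ℝ f z‖ ≤ K) :
    ‖f y - f x‖ ≤
      (C + (K - C) * volume.real (Ioo 0 1 ∩ lineMap (k := ℝ) x y ⁻¹' s)) * ‖y - x‖ := by
  have hmem : ∀ t ∈ Ioo (0 : ℝ) 1, lineMap x y t ∈ openSegment ℝ x y :=
    fun t ht ↦ lineMap_mem_openSegment ℝ x y ht
  have hcont : ContinuousOn (f ∘ lineMap (k := ℝ) x y) (Icc 0 1) :=
    hfc.comp lineMap_continuous.continuousOn fun t ht ↦ lineMap_mem_segment ℝ x y ht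
  have hderiv : ∀ t ∈ Ioo (0 : ℝ) 1,
      HasDerivAt (f ∘ lineMap (k := ℝ) x y) (fderiv ℝ f (lineMap x y t) (y - x)) t :=
    fun t ht ↦ (hfd _ (hmem t ht)).hasFDerivAt.comp_hasDerivAt t hasDerivAt_lineMap
  have hbound {B t : ℝ} (ht : t ∈ Ioo (0 : ℝ) 1) (hB : ‖fderiv ℝ f (lineMap x y t)‖ ≤ B) :
      ‖deriv (f ∘ lineMap (k := ℝ) x y) t‖ ≤ B * ‖y - x‖ := by
    rw [(hderiv t ht).deriv]
    exact ContinuousLinearMap.le_of_opNorm_le _ hB _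
  have hincr := norm_sub_le_add_mul_volume_of_norm_deriv_le zero_le_one hs hcont
    (fun t ht ↦ (hderiv t ht).differentiableAt.differentiableWithinAt)
    (fun t ht hts ↦ hbound ht (hC _ (hmem t ht) hts))
    (fun t ht hts ↦ hbound ht (hK _ (hmem t ht) hts))
  simp only [Function.comp_apply, lineMap_apply_one, lineMap_apply_zero] at hincr
  linarith

theorem dist_lineMap_lineMap_le_half_dist_of_mem_closedBall {c x y : E} {R s t : ℝ}
    (hx : 2 * R ≤ dist x c) (hy : 2 * R ≤ dist y c) (hs : s ∈ Icc (0 : ℝ) 1)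
    (ht : t ∈ Icc (0 : ℝ) 1) (hsR : lineMap x y s ∈ closedBall c R)
    (htR : lineMap x y t ∈ closedBall c R) :
    dist (lineMap x y s) (lineMap x y t) ≤ dist x y / 2 := by
  wlog hst : s ≤ t generalizing s t
  · rw [dist_comm]
    exact this ht hs htR hsR (le_of_not_ge hst)
  rw [mem_closedBall] at hsR htR
  have hinside : dist (lineMap x y s) (lineMap x y t) ≤ 2 * R := by
    linarith [dist_triangle_right (lineMap x y s) (lineMap x y t) c]
  have hbefore : R ≤ s * dist x y := by
    have := dist_triangle x (lineMap x y s) c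
    rw [dist_left_lineMap, Real.norm_of_nonneg hs.1] at this
    linarith
  have hafter : R ≤ (1 - t) * dist x y := by
    have := dist_triangle y (lineMap x y t) c
    rw [dist_right_lineMap, Real.norm_of_nonneg (sub_nonneg.2 ht.2)] at this
    linarith
  rw [dist_lineMap_lineMap, dist_comm s t, Real.dist_eq, abs_of_nonneg (sub_nonneg.2 hst)]
    at hinside ⊢
  linarith

theorem volume_lineMap_preimage_closedBall_le_half {c x y : E} {R : ℝ} (hxy : x ≠ y)
    (hx : 2 * R ≤ dist x c) (hy : 2 * R ≤ dist y c) :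
    volume.real (Ioo 0 1 ∩ lineMap (k := ℝ) x y ⁻¹' closedBall c R) ≤ 1 / 2 := by
  refine ENNReal.toReal_le_of_le_ofReal (by norm_num) <|
    (Real.volume_le_diam _).trans <| ediam_le_of_forall_dist_le ?_
  rintro s ⟨hs, hsR⟩ t ⟨ht, htR⟩
  have hdist := dist_lineMap_lineMap_le_half_dist_of_mem_closedBall hx hy
    (Ioo_subset_Icc_self hs) (Ioo_subset_Icc_self ht) hsR htR
  rw [dist_lineMap_lineMap] at hdist
  exact le_of_mul_le_mul_right (by linarith) (dist_pos.2 hxy)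

theorem pointwise_contraction_outside_double_ball_general {f : E → F} {c x y : E} {R β K : ℝ}
    (hβK : β ≤ K) (hfc : ContinuousOn f (segment ℝ x y))
    (hfd : ∀ z ∈ openSegment ℝ x y, DifferentiableAt ℝ f z)
    (hβ : ∀ z ∈ openSegment ℝ x y, R < dist z c → ‖fderiv ℝ f z‖ ≤ β)
    (hK : ∀ z ∈ openSegment ℝ x y, dist z c ≤ R → ‖fderiv ℝ f z‖ ≤ K)
    (hx : 2 * R ≤ dist x c) (hy : 2 * R ≤ dist y c) :
    ‖f x - f y‖ ≤ (K + β) / 2 * ‖x - y‖ := by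
  rcases eq_or_ne x y with rfl | hxy
  · simp
  have hmeas : MeasurableSet (lineMap (k := ℝ) x y ⁻¹' closedBall c R) :=
    (isClosed_closedBall.preimage lineMap_continuous).measurableSet
  rw [norm_sub_rev (f x), norm_sub_rev x]
  calc ‖f y - f x‖
      ≤ (β + (K - β) * volume.real (Ioo 0 1 ∩ lineMap (k := ℝ) x y ⁻¹' closedBall c R))
          * ‖y - x‖ :=
        norm_sub_le_add_mul_volume_of_norm_fderiv_le hmeas hfc hfd
          (fun z hz hzR ↦ hβ z hz (not_le.1 hzR)) hK
    _ ≤ (β + (K - β) * (1 / 2)) * ‖y - x‖ := by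
        gcongr
        exact volume_lineMap_preimage_closedBall_le_half hxy hx hy
    _ = (K + β) / 2 * ‖y - x‖ := by ring

end

/-- If `q ↦ Q(q,p)` is differentiable with derivative of operator norm at
most `β` at every `q` with `‖q‖ > R` and at most `1` everywhere, then for `q₁, q₂` with
`‖q₁‖ > 2R` and `‖q₂‖ > 2R` one has `‖Q(q₁,p) − Q(q₂,p)‖ ≤ ((1+β)/2) ‖q₁ − q₂‖`. -/
theorem pointwise_contraction_outside_double_ball
    (m : ℕ) (hm : 1 ≤ m) (β : ℝ) (hβ0 : 0 < β) (hβ1 : β < 1) (R : ℝ) (hR : 0 < R)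
    (Q : EuclideanSpace ℝ (Fin m) × EuclideanSpace ℝ (Fin m) → EuclideanSpace ℝ (Fin m))
    (p : EuclideanSpace ℝ (Fin m))
    (hdiff : ∀ q : EuclideanSpace ℝ (Fin m),
      DifferentiableAt ℝ (fun q' => Q (q', p)) q)
    (hderβ : ∀ q : EuclideanSpace ℝ (Fin m), R < ‖q‖ →
      ‖fderiv ℝ (fun q' => Q (q', p)) q‖ ≤ β)
    (hder1 : ∀ q : EuclideanSpace ℝ (Fin m),
      ‖fderiv ℝ (fun q' => Q (q', p)) q‖ ≤ 1)
    (q₁ q₂ : EuclideanSpace ℝ (Fin m))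
    (hq₁ : 2 * R < ‖q₁‖) (hq₂ : 2 * R < ‖q₂‖) :
    ‖Q (q₁, p) - Q (q₂, p)‖ ≤ (1 + β) / 2 * ‖q₁ - q₂‖ :=
  pointwise_contraction_outside_double_ball_general (c := 0) hβ1.le
    (fun q _ ↦ (hdiff q).continuousAt.continuousWithinAt) (fun q _ ↦ hdiff q)
    (fun q _ hq ↦ hderβ q (by simpa using hq)) (fun q _ _ ↦ hder1 q)
    (by simpa using hq₁.le) (by simpa using hq₂.le)
end

section
/- Let m ≥ 1, R > 0 and q₁, q₂ ∈ ℝ^m with ‖q₁‖ > 2R and ‖q₂‖ > 2R. Then the Lebesgue measure of the set {t ∈ [0,1] : ‖(1−t)·q₁ + t·q₂‖ ≤ R} is at most 1/2; that is, at least half of the straight-line segment from q₁ to q₂ (in parameter length) lies outside the closed ball of radius R centered at the origin. -/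
open MeasureTheory

/-!
If the segment meets the ball of centre `c` and radius `R` at parameters `s ≤ t`, the part from `s`
to `t` is at most as long as the diameter `2R`, while the two end parts, from `q₁` to the point at
`s` and from the point at `t` to `q₂`, together have length at least `|q₁ - c| + |q₂ - c| - 2R`.
Comparing the lengths gives `t - s ≤ 2R / (|q₁ - c| + |q₂ - c|)`, which bounds the diameter, hence
the measure, of the set of such parameters.
-/

section NormedAddTorsor

variable {V P : Type*} [SeminormedAddCommGroup V] [NormedSpace ℝ V] [PseudoMetricSpace P]
  [NormedAddTorsor V P] {q₁ q₂ c : P} {R s t : ℝ}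

theorem dist_left_le_of_lineMap_mem_closedBall (hs : 0 ≤ s)
    (hsR : AffineMap.lineMap q₁ q₂ s ∈ Metric.closedBall c R) :
    dist q₁ c ≤ s * dist q₁ q₂ + R :=
  calc
    dist q₁ c ≤ dist q₁ (AffineMap.lineMap q₁ q₂ s) + dist (AffineMap.lineMap q₁ q₂ s) c :=
      dist_triangle _ _ _
    _ ≤ s * dist q₁ q₂ + R := by
      rw [dist_left_lineMap, Real.norm_of_nonneg hs]
      gcongr
      exact hsR

theorem dist_right_le_of_lineMap_mem_closedBall (ht : t ≤ 1)
    (htR : AffineMap.lineMap q₁ q₂ t ∈ Metric.closedBall c R) :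
    dist q₂ c ≤ (1 - t) * dist q₁ q₂ + R := by
  rw [dist_comm q₁ q₂]
  rw [← AffineMap.lineMap_apply_one_sub] at htR
  exact dist_left_le_of_lineMap_mem_closedBall (sub_nonneg.2 ht) htR

theorem sub_mul_dist_add_dist_le_of_lineMap_mem_closedBall (hs : 0 ≤ s) (hst : s ≤ t) (ht : t ≤ 1)
    (hsR : AffineMap.lineMap q₁ q₂ s ∈ Metric.closedBall c R)
    (htR : AffineMap.lineMap q₁ q₂ t ∈ Metric.closedBall c R) :
    (t - s) * (dist q₁ c + dist q₂ c) ≤ 2 * R := by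
  have initial_part : dist q₁ c ≤ s * dist q₁ q₂ + R :=
    dist_left_le_of_lineMap_mem_closedBall hs hsR
  have final_part : dist q₂ c ≤ (1 - t) * dist q₁ q₂ + R :=
    dist_right_le_of_lineMap_mem_closedBall ht htR
  have middle_part : (t - s) * dist q₁ q₂ ≤ 2 * R :=
    calc
      (t - s) * dist q₁ q₂
          = dist (AffineMap.lineMap q₁ q₂ t) (AffineMap.lineMap q₁ q₂ s) := by
        rw [dist_lineMap_lineMap, Real.dist_eq, abs_of_nonneg (sub_nonneg.2 hst)]
      _ ≤ R + R := (dist_triangle_right _ _ c).trans (add_le_add htR hsR)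
      _ = 2 * R := (two_mul R).symm
  calc
    (t - s) * (dist q₁ c + dist q₂ c)
        ≤ (t - s) * ((s * dist q₁ q₂ + R) + ((1 - t) * dist q₁ q₂ + R)) :=
      mul_le_mul_of_nonneg_left (add_le_add initial_part final_part) (sub_nonneg.2 hst)
    _ = (1 - (t - s)) * ((t - s) * dist q₁ q₂) + (t - s) * (2 * R) := by ring
    _ ≤ (1 - (t - s)) * (2 * R) + (t - s) * (2 * R) := by
      gcongr
      linarith
    _ = 2 * R := by ring

theorem ediam_Icc_inter_lineMap_preimage_closedBall_le (hc : 0 < dist q₁ c + dist q₂ c) :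
    Metric.ediam (Set.Icc (0 : ℝ) 1 ∩ AffineMap.lineMap q₁ q₂ ⁻¹' Metric.closedBall c R) ≤
      ENNReal.ofReal (2 * R / (dist q₁ c + dist q₂ c)) := by
  refine Metric.ediam_le fun s hs t ht ↦ ?_
  wlog hst : s ≤ t generalizing s t
  · rw [edist_comm]
    exact this t ht s hs (le_of_not_ge hst)
  rw [edist_comm, edist_dist, Real.dist_eq, abs_of_nonneg (sub_nonneg.2 hst)]
  exact ENNReal.ofReal_le_ofReal <| (le_div_iff₀ hc).2 <|
    sub_mul_dist_add_dist_le_of_lineMap_mem_closedBall hs.1.1 hst ht.1.2 hs.2 ht.2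

theorem volume_Icc_inter_lineMap_preimage_closedBall_le (hc : 0 < dist q₁ c + dist q₂ c) :
    volume (Set.Icc (0 : ℝ) 1 ∩ AffineMap.lineMap q₁ q₂ ⁻¹' Metric.closedBall c R) ≤
      ENNReal.ofReal (2 * R / (dist q₁ c + dist q₂ c)) :=
  (Real.volume_le_diam _).trans (ediam_Icc_inter_lineMap_preimage_closedBall_le hc)

theorem segment_mostly_outside_ball_general (hc : 0 < dist q₁ c + dist q₂ c)
    (hR : 4 * R ≤ dist q₁ c + dist q₂ c) :
    volume (Set.Icc (0 : ℝ) 1 ∩ AffineMap.lineMap q₁ q₂ ⁻¹' Metric.closedBall c R) ≤ 1 / 2 := by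
  have ratio_le : 2 * R / (dist q₁ c + dist q₂ c) ≤ 2⁻¹ := by
    rw [div_le_iff₀ hc]
    linarith
  calc
    volume (Set.Icc (0 : ℝ) 1 ∩ AffineMap.lineMap q₁ q₂ ⁻¹' Metric.closedBall c R)
        ≤ ENNReal.ofReal (2 * R / (dist q₁ c + dist q₂ c)) :=
      volume_Icc_inter_lineMap_preimage_closedBall_le hc
    _ ≤ ENNReal.ofReal 2⁻¹ := ENNReal.ofReal_le_ofReal ratio_le
    _ = 1 / 2 := by rw [ENNReal.ofReal_inv_of_pos two_pos, ENNReal.ofReal_ofNat, one_div]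

end NormedAddTorsor

/-- If `‖q₁‖ > 2R` and `‖q₂‖ > 2R`, then the set of parameters
`t ∈ [0,1]` for which the point `(1−t) q₁ + t q₂` of the segment from `q₁` to `q₂` lies
in the closed ball of radius `R` has Lebesgue measure at most `1/2`. -/
theorem segment_mostly_outside_ball
    (m : ℕ) (hm : 1 ≤ m) (R : ℝ) (hR : 0 < R)
    (q₁ q₂ : EuclideanSpace ℝ (Fin m))
    (hq₁ : 2 * R < ‖q₁‖) (hq₂ : 2 * R < ‖q₂‖) :
    volume {t : ℝ | t ∈ Set.Icc (0 : ℝ) 1 ∧ ‖(1 - t) • q₁ + t • q₂‖ ≤ R} ≤ 1 / 2 := by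
  simpa only [Set.inter_def, Set.mem_preimage, mem_closedBall_zero_iff,
    AffineMap.lineMap_apply_module] using
    segment_mostly_outside_ball_general (q₁ := q₁) (q₂ := q₂) (c := 0) (R := R)
      (by simp only [dist_zero_right]; linarith) (by simp only [dist_zero_right]; linarith)
end
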